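/- arXiv:1004.3552 — 4 statements merged into one kernel-verified Lean document; each statement's English description precedes it below -/
import Mathlib

section
/- Let 𝒰 be a group of unitary operators on a separable complex Hilbert space H (i.e., a subgroup of the unitary group of H), and suppose f ∈ H is a frame vector for 𝒰 with frame bounds A² and B² (0 < A ≤ B). Then there exist: a Hilbert space K containing H (as a closed subspace), a group 𝒱 of unitary operators on K such that every V ∈ 𝒱 maps H into H and the restriction map V ↦ V|_H is a group isomorphism of 𝒱 onto 𝒰, a positive bounded operator E : K → H satisfying A‖g‖ ≤ ‖Eg‖ ≤ B‖g‖ for all g ∈ H, and a complete wandering vector e ∈ K for 𝒱, such that E(Ve) = (V|_H)f for all V ∈ 𝒱. -/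
local notation "⟪" x ", " y "⟫" => @inner ℂ _ _ x y

open ContinuousLinearMap in
/-- Square root of `T† T` for an operator bounded below. -/
theorem aux_polar {H K : Type} [NormedAddCommGroup H] [InnerProductSpace ℂ H] [CompleteSpace H]
    [NormedAddCommGroup K] [InnerProductSpace ℂ K] [CompleteSpace K]
    (T : H →L[ℂ] K) (A : ℝ) (hA : 0 < A) (hT : ∀ x, A * ‖x‖ ≤ ‖T x‖) :
    ∃ R Q : H →L[ℂ] H, R.IsPositive ∧ R * R = adjoint T ∘L T ∧ R * Q = 1 ∧ Q * R = 1 ∧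
      ∀ W : H →L[ℂ] H, Commute (adjoint T ∘L T) W → Commute R W := by
  have hpos : (0 : H →L[ℂ] H) ≤ adjoint T ∘L T := by
    rw [nonneg_iff_isPositive]
    exact isPositive_adjoint_comp_self T
  have hu : IsUnit (adjoint T ∘L T) := by
    refine isUnit_of_forall_le_norm_inner_map _ (c := ⟨A ^ 2, by positivity⟩)
      (by show (0 : ℝ) < A ^ 2; positivity) fun x => ?_
    rw [comp_apply, adjoint_inner_left, inner_self_eq_norm_sq_to_K]
    have h := hT x
    have h0 : 0 ≤ A * ‖x‖ := by positivity
    simp only [norm_pow, RCLike.norm_ofReal, abs_norm]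
    show ‖x‖ ^ 2 * A ^ 2 ≤ _
    nlinarith
  have hR : IsUnit (CFC.sqrt (adjoint T ∘L T)) := (CFC.isUnit_sqrt_iff _ hpos).2 hu
  obtain ⟨r, hr⟩ := hR
  refine ⟨CFC.sqrt (adjoint T ∘L T), ↑r⁻¹, ?_, CFC.sqrt_mul_sqrt_self _ hpos, ?_, ?_, ?_⟩
  · rw [← nonneg_iff_isPositive]
    exact CFC.sqrt_nonneg _
  · rw [← hr]; simp
  · rw [← hr]; simp
  · intro W hW
    exact hW.cfcₙ_nnreal _

/-- Left translation on `ℓ²(G)`. -/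
noncomputable def auxShift (G : Type) [Group G] :
    G →* ((lp (fun _ : G => ℂ) 2) ≃ₗᵢ[ℂ] (lp (fun _ : G => ℂ) 2)) :=
  let tr : G → lp (fun _ : G => ℂ) 2 → lp (fun _ : G => ℂ) 2 := fun g a =>
    ⟨fun h => a (g⁻¹ * h), by
      have h2 : 0 < (2 : ENNReal).toReal := by norm_num
      have := (lp.memℓp a).summable h2
      exact memℓp_gen (((Equiv.mulLeft g⁻¹).summable_iff).2 this)⟩
  { toFun := fun g =>
      { toFun := tr g
        invFun := tr g⁻¹
        map_add' := fun a b => by ext h; rfl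
        map_smul' := fun c a => by ext h; rfl
        left_inv := fun a => by ext h; simp [tr]
        right_inv := fun a => by ext h; simp [tr]
        norm_map' := fun a => by
          have h2 : 0 < (2 : ENNReal).toReal := by norm_num
          show ‖tr g a‖ = ‖a‖
          rw [lp.norm_eq_tsum_rpow h2, lp.norm_eq_tsum_rpow h2]
          congr 1
          exact (Equiv.mulLeft g⁻¹).tsum_eq (fun h => ‖a h‖ ^ (2 : ENNReal).toReal) }
    map_one' := by ext a h; simp [tr]
    map_mul' := fun g g' => by ext a h; simp [tr, mul_assoc] }

theorem auxShift_apply (G : Type) [Group G] (g : G) (a : lp (fun _ : G => ℂ) 2) (h : G) :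
    auxShift G g a h = a (g⁻¹ * h) := rfl

theorem auxShift_single (G : Type) [DecidableEq G] [Group G] (g : G) :
    auxShift G g (lp.single 2 (1 : G) (1 : ℂ)) = lp.single 2 g (1 : ℂ) := by
  ext h
  rw [auxShift_apply, lp.single_apply, lp.single_apply, Pi.single_apply, Pi.single_apply]
  simp [inv_mul_eq_one, eq_comm]

theorem aux_basis (G : Type) [DecidableEq G] :
    ∃ b : HilbertBasis G ℂ (lp (fun _ : G => ℂ) 2), ∀ g, b g = lp.single 2 g (1 : ℂ) := by
  refine ⟨⟨LinearIsometryEquiv.refl ℂ _⟩, fun g => ?_⟩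
  rw [← HilbertBasis.repr_symm_single]
  rfl

/-- The analysis operator. -/
theorem aux_analysis {H G : Type} [NormedAddCommGroup H] [InnerProductSpace ℂ H]
    (v : G → H) (B : ℝ) (hB : 0 ≤ B)
    (hs : ∀ x, Summable fun g => ‖⟪v g, x⟫‖ ^ 2)
    (hb : ∀ x, ∑' g, ‖⟪v g, x⟫‖ ^ 2 ≤ B ^ 2 * ‖x‖ ^ 2) :
    ∃ T : H →L[ℂ] lp (fun _ : G => ℂ) 2, (∀ x g, T x g = ⟪v g, x⟫) ∧
      ∀ x, ‖T x‖ ^ 2 = ∑' g, ‖⟪v g, x⟫‖ ^ 2 := by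
  have h2 : 0 < (2 : ENNReal).toReal := by norm_num
  let T0 : H →ₗ[ℂ] lp (fun _ : G => ℂ) 2 :=
    { toFun := fun x => ⟨fun g => ⟪v g, x⟫, memℓp_gen (by simpa using hs x)⟩
      map_add' := fun x y => by ext g; exact inner_add_right _ _ _
      map_smul' := fun c x => by ext g; exact inner_smul_right _ _ _ }
  have hn : ∀ x, ‖T0 x‖ ^ 2 = ∑' g, ‖⟪v g, x⟫‖ ^ 2 := fun x => by
    have := lp.norm_rpow_eq_tsum h2 (T0 x)
    simpa [T0] using this
  refine ⟨T0.mkContinuous B fun x => ?_, fun x g => rfl, hn⟩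
  refine le_of_sq_le_sq ?_ (by positivity)
  rw [hn, mul_pow]; exact hb x

set_option maxHeartbeats 1000000 in
/-- **Orthonormal dilation of frame vectors for unitary groups.**
If `𝒰` is a group of unitary operators on a separable complex Hilbert space `H` and
`f` is a frame vector for `𝒰` with frame bounds `A²`, `B²`, then there exist a larger
Hilbert space `K ⊇ H` (via an isometric embedding `ι` with closed range), a unitary group
`𝒱` on `K` whose restriction to `H` is a group isomorphism onto `𝒰` (given by `ρ : 𝒰 ≃* 𝒱`),
a positive operator `E : K → K` with range in `H` satisfying `A‖g‖ ≤ ‖Eg‖ ≤ B‖g‖` on `H`,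
and a complete wandering vector `e ∈ K` for `𝒱` with `E(Ve) = (V|_H) f` for all `V ∈ 𝒱`. -/
theorem orthonormal_dilation_unitary_group
    {H : Type} [NormedAddCommGroup H] [InnerProductSpace ℂ H] [CompleteSpace H]
    [TopologicalSpace.SeparableSpace H]
    (𝒰 : Subgroup (H ≃ₗᵢ[ℂ] H)) (f : H) (A B : ℝ) (hA : 0 < A) (hAB : A ≤ B)
    (hframe : ∀ x : H,
      A ^ 2 * ‖x‖ ^ 2 ≤ ∑' U : 𝒰, ‖⟪(U : H ≃ₗᵢ[ℂ] H) f, x⟫‖ ^ 2 ∧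
      ∑' U : 𝒰, ‖⟪(U : H ≃ₗᵢ[ℂ] H) f, x⟫‖ ^ 2 ≤ B ^ 2 * ‖x‖ ^ 2) :
    ∃ (K : Type) (_ : NormedAddCommGroup K) (_ : InnerProductSpace ℂ K) (_ : CompleteSpace K)
      (ι : H →ₗᵢ[ℂ] K) (𝒱 : Subgroup (K ≃ₗᵢ[ℂ] K)) (ρ : 𝒰 ≃* 𝒱)
      (E : K →L[ℂ] K) (e : K),
      -- `H` sits inside `K` as a closed subspace
      IsClosed (Set.range ι) ∧
      -- every `V ∈ 𝒱` maps `H` into `H`, and `ρ` realizes the restriction map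
      -- `V ↦ V|_H` as a group isomorphism of `𝒱` onto `𝒰`
      (∀ U : 𝒰, ∀ x : H, ((ρ U : 𝒱) : K ≃ₗᵢ[ℂ] K) (ι x) = ι ((U : H ≃ₗᵢ[ℂ] H) x)) ∧
      -- `E` is a positive operator from `K` into `H`
      E.IsPositive ∧ (∀ y : K, E y ∈ Set.range ι) ∧
      -- `A‖g‖ ≤ ‖Eg‖ ≤ B‖g‖` for all `g ∈ H`
      (∀ x : H, A * ‖ι x‖ ≤ ‖E (ι x)‖ ∧ ‖E (ι x)‖ ≤ B * ‖ι x‖) ∧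
      -- `e` is a complete wandering vector for `𝒱`
      Orthonormal ℂ (fun V : 𝒱 => (V : K ≃ₗᵢ[ℂ] K) e) ∧
      (Submodule.span ℂ (Set.range fun V : 𝒱 => (V : K ≃ₗᵢ[ℂ] K) e)).topologicalClosure = ⊤ ∧
      -- `E(Ve) = (V|_H) f` for all `V ∈ 𝒱`
      (∀ U : 𝒰, E (((ρ U : 𝒱) : K ≃ₗᵢ[ℂ] K) e) = ι ((U : H ≃ₗᵢ[ℂ] H) f)) := by
  classical
  have hsum : ∀ x : H, Summable fun U : 𝒰 => ‖⟪(U : H ≃ₗᵢ[ℂ] H) f, x⟫‖ ^ 2 := by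
    intro x
    by_contra hns
    have h := (hframe x).1
    rw [tsum_eq_zero_of_not_summable hns] at h
    have hx : ‖x‖ = 0 := by
      by_contra hne
      have : 0 < A ^ 2 * ‖x‖ ^ 2 := by positivity
      linarith
    rw [norm_eq_zero] at hx
    subst hx
    exact hns (by simp)
  have hB : 0 ≤ B := hA.le.trans hAB
  obtain ⟨T, hT, hTn⟩ := aux_analysis (fun U : 𝒰 => (U : H ≃ₗᵢ[ℂ] H) f) B hB hsum
    (fun x => (hframe x).2)
  have hlow : ∀ x, A * ‖x‖ ≤ ‖T x‖ := fun x => by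
    refine le_of_sq_le_sq ?_ (norm_nonneg _)
    rw [hTn, mul_pow]; exact (hframe x).1
  have hup : ∀ x, ‖T x‖ ≤ B * ‖x‖ := fun x => by
    refine le_of_sq_le_sq ?_ (by positivity)
    rw [hTn, mul_pow]; exact (hframe x).2
  obtain ⟨R, Q, hRpos, hRR, hRQ, hQR, hcomm⟩ := aux_polar T A hA hlow
  have hRQ' : ∀ x, R (Q x) = x := fun x => DFunLike.congr_fun hRQ x
  have hQR' : ∀ x, Q (R x) = x := fun x => DFunLike.congr_fun hQR x
  have hRsa : ∀ x y, ⟪R x, y⟫ = ⟪x, R y⟫ := fun x y => hRpos.isSymmetric x y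
  have hRT : ∀ x y, ⟪R x, R y⟫ = ⟪T x, T y⟫ := fun x y => by
    rw [hRsa, ← ContinuousLinearMap.adjoint_inner_right]
    exact congrArg (fun z => ⟪x, z⟫) (DFunLike.congr_fun hRR y)
  have hRn : ∀ x, ‖R x‖ = ‖T x‖ := fun x => by
    have h := hRT x x
    rw [inner_self_eq_norm_sq_to_K, inner_self_eq_norm_sq_to_K] at h
    have h' : ‖R x‖ ^ 2 = ‖T x‖ ^ 2 := by exact_mod_cast h
    exact (sq_eq_sq₀ (norm_nonneg _) (norm_nonneg _)).1 h'
  have hTU : ∀ (U : 𝒰) (x : H), auxShift 𝒰 U (T x) = T ((U : H ≃ₗᵢ[ℂ] H) x) := fun U x => by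
    ext W
    rw [auxShift_apply, hT, hT]
    rw [← LinearIsometryEquiv.inner_map_map (U : H ≃ₗᵢ[ℂ] H)]
    congr 1
    show ((U : H ≃ₗᵢ[ℂ] H) * ((U⁻¹ * W : 𝒰) : H ≃ₗᵢ[ℂ] H)) f = _
    simp
  have hSU : ∀ U : 𝒰, Commute R
      ((U : H ≃ₗᵢ[ℂ] H).toContinuousLinearEquiv : H →L[ℂ] H) := fun U => by
    apply hcomm
    ext x
    refine ext_inner_right ℂ fun y => ?_
    show ⟪ContinuousLinearMap.adjoint T (T ((U : H ≃ₗᵢ[ℂ] H) x)), y⟫ =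
      ⟪(U : H ≃ₗᵢ[ℂ] H) (ContinuousLinearMap.adjoint T (T x)), y⟫
    obtain ⟨z, rfl⟩ := (U : H ≃ₗᵢ[ℂ] H).surjective y
    rw [LinearIsometryEquiv.inner_map_map, ContinuousLinearMap.adjoint_inner_left,
      ContinuousLinearMap.adjoint_inner_left, ← hTU, ← hTU, LinearIsometryEquiv.inner_map_map]
  have hRU : ∀ (U : 𝒰) x, R ((U : H ≃ₗᵢ[ℂ] H) x) = (U : H ≃ₗᵢ[ℂ] H) (R x) :=
    fun U x => DFunLike.congr_fun (hSU U).eq x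
  have hQU : ∀ (U : 𝒰) x, Q ((U : H ≃ₗᵢ[ℂ] H) x) = (U : H ≃ₗᵢ[ℂ] H) (Q x) := fun U x => by
    conv_lhs => rw [← hRQ' x, ← hRU, hQR']
  let ι : H →ₗᵢ[ℂ] lp (fun _ : 𝒰 => ℂ) 2 :=
    { toLinearMap := (T ∘L Q : H →L[ℂ] lp (fun _ : 𝒰 => ℂ) 2).toLinearMap
      norm_map' := fun x => by
        show ‖T (Q x)‖ = ‖x‖
        rw [← hRn, hRQ'] }
  have hι : ∀ x, ι x = T (Q x) := fun x => rfl
  let J : H →L[ℂ] lp (fun _ : 𝒰 => ℂ) 2 := ι.toContinuousLinearMap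
  have hJ : ∀ x, J x = ι x := fun x => rfl
  have hJJ : ∀ x, ContinuousLinearMap.adjoint J (ι x) = x := fun x => by
    refine ext_inner_right ℂ fun y => ?_
    rw [ContinuousLinearMap.adjoint_inner_left, hJ, LinearIsometry.inner_map_map]
  let E := J ∘L R ∘L ContinuousLinearMap.adjoint J
  have hE : ∀ y, E y = ι (R (ContinuousLinearMap.adjoint J y)) := fun y => rfl
  let e : lp (fun _ : 𝒰 => ℂ) 2 := lp.single 2 (1 : 𝒰) (1 : ℂ)
  have he : ∀ U : 𝒰, auxShift 𝒰 U e = lp.single 2 U (1 : ℂ) := auxShift_single 𝒰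
  have hinj : Function.Injective (auxShift 𝒰) := fun U W h => by
    have h1 : (lp.single 2 U (1 : ℂ) : lp (fun _ : 𝒰 => ℂ) 2) = lp.single 2 W (1 : ℂ) := by
      rw [← he, ← he, h]
    by_contra hne
    have h2 := congrArg (fun a : lp (fun _ : 𝒰 => ℂ) 2 => a U) h1
    simp [hne] at h2
  let ρ : 𝒰 ≃* (auxShift 𝒰).range := MonoidHom.ofInjective hinj
  have hρ : ∀ U, ((ρ U : (auxShift 𝒰).range) :
    lp (fun _ : 𝒰 => ℂ) 2 ≃ₗᵢ[ℂ] lp (fun _ : 𝒰 => ℂ) 2) = auxShift 𝒰 U := fun U => rfl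
  obtain ⟨b, hb0⟩ := aux_basis 𝒰
  have hb : ∀ U, b U = auxShift 𝒰 U e := fun U => (hb0 U).trans (he U).symm
  have hfun : (fun V : (auxShift 𝒰).range =>
      (V : lp (fun _ : 𝒰 => ℂ) 2 ≃ₗᵢ[ℂ] lp (fun _ : 𝒰 => ℂ) 2) e) = b ∘ ρ.symm := by
    funext V
    obtain ⟨U, rfl⟩ := ρ.surjective V
    simp only [Function.comp, MulEquiv.symm_apply_apply]
    rw [hb, hρ]
  refine ⟨lp (fun _ : 𝒰 => ℂ) 2, inferInstance, inferInstance, inferInstance, ι,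
    (auxShift 𝒰).range, ρ, E, e, ?_, ?_, ?_, ?_, ?_, ?_, ?_, ?_⟩
  · exact ι.isometry.isClosedEmbedding.isClosed_range
  · intro U x
    rw [hρ, hι, hι, hTU, hQU]
  · exact hRpos.conj_adjoint J
  · exact fun y => ⟨_, (hE y).symm⟩
  · intro x
    rw [hE, hJJ, ι.norm_map, ι.norm_map, hRn]
    exact ⟨hlow x, hup x⟩
  · rw [hfun]
    exact b.orthonormal.comp _ ρ.symm.injective
  · rw [hfun, ρ.symm.surjective.range_comp]
    exact b.dense_span
  · intro U
    rw [hρ, hE]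
    congr 1
    refine ext_inner_right ℂ fun y => ?_
    rw [hRsa, ContinuousLinearMap.adjoint_inner_left, hJ, hι, hQR', he, lp.inner_single_left, hT]
    simp
end

section
/- Let 𝒰 be a group of unitary operators on a complex Hilbert space H, let f ∈ H be a frame vector for 𝒰 with optimal frame bounds A² and B² and frame operator S, let Φ : H → ℓ²(𝒰) be the analysis operator of the canonical Parseval frame {S^{-1/2}Uf}_{U∈𝒰}, and define E = Φ S^{1/2} Φ* : ℓ²(𝒰) → ℓ²(𝒰). Then E is a positive operator with range contained in Φ(H), E e_U = Φ(Uf) for all U ∈ 𝒰, and A‖g‖ ≤ ‖Eg‖ ≤ B‖g‖ for all g ∈ Φ(H). -/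
local notation "⟪" x ", " y "⟫" => @inner ℂ _ _ x y

/-- Let `f` be a frame vector for a group `𝒰` of unitaries on `H` with optimal frame bounds
`A²`, `B²` and frame operator `S`, let `Φ : H → ℓ²(𝒰)` be the analysis operator of the
canonical Parseval frame `{S^{-1/2}Uf}`, and set `E = Φ S^{1/2} Φ*`. Then `E` is positive,
has range contained in `Φ(H)`, satisfies `E e_U = Φ(Uf)` for all `U ∈ 𝒰`, and
`A‖g‖ ≤ ‖Eg‖ ≤ B‖g‖` for all `g ∈ Φ(H)`. -/
theorem dilation_operator_properties
    {H : Type} [NormedAddCommGroup H] [InnerProductSpace ℂ H] [CompleteSpace H]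
    (𝒰 : Subgroup (H ≃ₗᵢ[ℂ] H)) [DecidableEq 𝒰] (f : H) (A B : ℝ) (hA : 0 < A) (hAB : A ≤ B)
    -- `{Uf}_{U ∈ 𝒰}` is a frame for `H` with bounds `A²`, `B²` ...
    (hframe : ∀ x : H,
      A ^ 2 * ‖x‖ ^ 2 ≤ ∑' U : 𝒰, ‖⟪(U : H ≃ₗᵢ[ℂ] H) f, x⟫‖ ^ 2 ∧
      ∑' U : 𝒰, ‖⟪(U : H ≃ₗᵢ[ℂ] H) f, x⟫‖ ^ 2 ≤ B ^ 2 * ‖x‖ ^ 2)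
    -- ... and these bounds are optimal
    (hAopt : ∀ A' : ℝ, (∀ x : H, A' * ‖x‖ ^ 2 ≤ ∑' U : 𝒰, ‖⟪(U : H ≃ₗᵢ[ℂ] H) f, x⟫‖ ^ 2) →
      A' ≤ A ^ 2)
    (hBopt : ∀ B' : ℝ, (∀ x : H, ∑' U : 𝒰, ‖⟪(U : H ≃ₗᵢ[ℂ] H) f, x⟫‖ ^ 2 ≤ B' * ‖x‖ ^ 2) →
      B ^ 2 ≤ B')
    -- `S` is the frame operator of `{Uf}_{U ∈ 𝒰}`
    (S : H →L[ℂ] H)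
    (hS : ∀ x : H, HasSum (fun U : 𝒰 => ⟪(U : H ≃ₗᵢ[ℂ] H) f, x⟫ • (U : H ≃ₗᵢ[ℂ] H) f) (S x))
    -- `R = S^{-1/2}`: the positive square root of the inverse of `S`
    (R : H →L[ℂ] H) (hRpos : R.IsPositive)
    (hRS : (R ∘L R) ∘L S = ContinuousLinearMap.id ℂ H)
    (hSR : S ∘L (R ∘L R) = ContinuousLinearMap.id ℂ H)
    -- `Shalf = S^{1/2}`: the positive square root of `S`
    (Shalf : H →L[ℂ] H) (hShalfpos : Shalf.IsPositive) (hShalf : Shalf ∘L Shalf = S)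
    -- `Φ` is the analysis operator of the canonical Parseval frame `{S^{-1/2}Uf}`
    (Φ : H →L[ℂ] lp (fun _ : 𝒰 => ℂ) 2)
    (hΦ : ∀ (g : H) (U : 𝒰), Φ g U = ⟪R ((U : H ≃ₗᵢ[ℂ] H) f), g⟫)
    -- `E = Φ S^{1/2} Φ*`
    (E : lp (fun _ : 𝒰 => ℂ) 2 →L[ℂ] lp (fun _ : 𝒰 => ℂ) 2)
    (hE : E = Φ ∘L Shalf ∘L ContinuousLinearMap.adjoint Φ) :
    -- `E` is positive with range contained in `Φ(H)`
    E.IsPositive ∧ (∀ y : lp (fun _ : 𝒰 => ℂ) 2, E y ∈ Set.range Φ) ∧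
    -- `E e_U = Φ(Uf)` for all `U ∈ 𝒰`
    (∀ U : 𝒰, E (lp.single 2 U (1 : ℂ)) = Φ ((U : H ≃ₗᵢ[ℂ] H) f)) ∧
    -- `A‖g‖ ≤ ‖Eg‖ ≤ B‖g‖` for all `g ∈ Φ(H)`
    (∀ g ∈ Set.range Φ, A * ‖g‖ ≤ ‖E g‖ ∧ ‖E g‖ ≤ B * ‖g‖) := by
  have hRsym : ∀ x y : H, ⟪R x, y⟫ = ⟪x, R y⟫ := fun x y => hRpos.isSymmetric x y
  have hHsym : ∀ x y : H, ⟪Shalf x, y⟫ = ⟪x, Shalf y⟫ := fun x y => hShalfpos.isSymmetric x y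
  have h1 : ∀ x, R (R (S x)) = x := fun x => by
    simpa using congrArg (fun T : H →L[ℂ] H => T x) hRS
  have h2 : ∀ x, S (R (R x)) = x := fun x => by
    simpa using congrArg (fun T : H →L[ℂ] H => T x) hSR
  have hSS : ∀ x, Shalf (Shalf x) = S x := fun x => by
    simpa using congrArg (fun T : H →L[ℂ] H => T x) hShalf
  have hcomm : ∀ x, R (S x) = S (R x) := fun x => by
    calc R (S x) = S (R (R (R (S x)))) := (h2 _).symm
      _ = S (R x) := by rw [h1]
  -- the sum identity
  have hsum : ∀ x : H, HasSum (fun U : 𝒰 => ‖⟪(U : H ≃ₗᵢ[ℂ] H) f, x⟫‖ ^ 2) (‖Shalf x‖ ^ 2) := by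
    intro x
    have h := (hS x).mapL (innerSL ℂ x)
    have h' := h.mapL Complex.reCLM
    convert h' using 1
    · funext U
      simp only [innerSL_apply_apply, inner_smul_right, Complex.reCLM_apply]
      rw [← inner_conj_symm x, Complex.mul_conj, Complex.ofReal_re, Complex.normSq_eq_norm_sq]
    · simp only [innerSL_apply_apply, Complex.reCLM_apply]
      rw [← hSS, ← hHsym, inner_self_eq_norm_sq_to_K]
      norm_cast
  -- the inverse of `R` is the positive square root of `S`
  have hQ : Shalf = S ∘L R := by
    have hQpos : (S ∘L R).IsPositive := by
      rw [ContinuousLinearMap.isPositive_iff_complex]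
      intro x
      have key : ⟪S (R x), x⟫ = ⟪S (R x), R (S (R x))⟫ := by
        rw [hcomm (R x), h2]
      have := (ContinuousLinearMap.isPositive_iff_complex R).1 hRpos (S (R x))
      rw [← hRsym] at key
      simpa [key] using this
    have e1 : CFC.sqrt S = Shalf :=
      CFC.sqrt_unique (by simpa [ContinuousLinearMap.mul_def] using hShalf)
        ((ContinuousLinearMap.nonneg_iff_isPositive _).2 hShalfpos)
    have e2 : CFC.sqrt S = S ∘L R := by
      refine CFC.sqrt_unique ?_ ((ContinuousLinearMap.nonneg_iff_isPositive _).2 hQpos)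
      ext x
      simp only [ContinuousLinearMap.mul_def, ContinuousLinearMap.comp_apply]
      rw [hcomm, h2]
    rw [← e1, e2]
  have hQR : ∀ x, Shalf (R x) = x := fun x => by rw [hQ]; exact h2 x
  have hnorm : ∀ g, ‖Φ g‖ = ‖g‖ := by
    intro g
    have hs := hsum (R g)
    rw [hQR] at hs
    have ht := lp.norm_rpow_eq_tsum (p := 2) (by norm_num) (Φ g)
    have : ‖Φ g‖ ^ 2 = ‖g‖ ^ 2 := by
      rw [← hs.tsum_eq]
      simpa [hΦ, hRsym] using ht
    exact (sq_eq_sq₀ (norm_nonneg _) (norm_nonneg _)).1 this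
  have hadj : ∀ x, ContinuousLinearMap.adjoint Φ (Φ x) = x := by
    have := (ContinuousLinearMap.norm_map_iff_adjoint_comp_self Φ).1 hnorm
    intro x
    simpa using congrArg (fun T : H →L[ℂ] H => T x) this
  have hsingle : ∀ U : 𝒰, ContinuousLinearMap.adjoint Φ (lp.single 2 U (1 : ℂ))
      = R ((U : H ≃ₗᵢ[ℂ] H) f) := by
    intro U
    refine ext_inner_right ℂ fun g => ?_
    rw [ContinuousLinearMap.adjoint_inner_left, lp.inner_single_left, hΦ]
    simp
  subst hE
  refine ⟨hShalfpos.conj_adjoint Φ, fun y => ⟨_, rfl⟩, fun U => ?_, ?_⟩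
  · simp only [ContinuousLinearMap.comp_apply]
    rw [hsingle, hQR]
  · rintro _ ⟨x, rfl⟩
    simp only [ContinuousLinearMap.comp_apply]
    rw [hadj, hnorm, hnorm]
    have hx := hframe x
    rw [(hsum x).tsum_eq, ← mul_pow, ← mul_pow] at hx
    have hB : 0 ≤ B := hA.le.trans hAB
    exact ⟨(sq_le_sq₀ (by positivity) (by positivity)).1 hx.1,
      (sq_le_sq₀ (by positivity) (by positivity)).1 hx.2⟩
end

section
/- Let 𝒰 be a group of unitary operators on a complex Hilbert space H, let f ∈ H be a frame vector for 𝒰 with frame operator S, let Φ : H → ℓ²(𝒰) be the analysis operator of the canonical Parseval frame {S^{-1/2}Uf}_{U∈𝒰}, and define E = Φ S^{1/2} Φ*. Then E² is unitarily equivalent to S ⊕ 0: the map U₀ : H ⊕ Φ(H)^⊥ → ℓ²(𝒰) defined by U₀(g ⊕ h) = Φg + h is a unitary isomorphism and E² U₀ = U₀ (S ⊕ 0), where 0 denotes the zero operator on the orthogonal complement Φ(H)^⊥ in ℓ²(𝒰). -/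
local notation "⟪" x ", " y "⟫" => @inner ℂ _ _ x y

theorem dilation_aux {H K : Type} [NormedAddCommGroup H] [InnerProductSpace ℂ H] [CompleteSpace H]
    [NormedAddCommGroup K] [InnerProductSpace ℂ K] [CompleteSpace K]
    (S Shalf : H →L[ℂ] H) (hShalf : Shalf ∘L Shalf = S) (Φ : H →L[ℂ] K)
    (hinner : ∀ x y, ⟪Φ x, Φ y⟫ = ⟪x, y⟫) (E : K →L[ℂ] K)
    (hE : E = Φ ∘L Shalf ∘L ContinuousLinearMap.adjoint Φ)
    (W : Submodule ℂ K) (hW : W = (LinearMap.range (Φ : H →ₗ[ℂ] K))ᗮ) :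
    ∃ U₀ : WithLp 2 (H × W) ≃ₗᵢ[ℂ] K,
      (∀ (g : H) (h : W), U₀ ((WithLp.equiv 2 (H × W)).symm (g, h)) = Φ g + (h : K)) ∧
      (∀ (g : H) (h : W),
        (E ∘L E) (U₀ ((WithLp.equiv 2 (H × W)).symm (g, h))) =
          U₀ ((WithLp.equiv 2 (H × W)).symm (S g, 0))) := by
  have hadj : ∀ x, ContinuousLinearMap.adjoint Φ (Φ x) = x := by
    intro x
    refine ext_inner_left ℂ fun v => ?_
    rw [ContinuousLinearMap.adjoint_inner_right, hinner]
  have hWmem : ∀ h : K, h ∈ W ↔ ContinuousLinearMap.adjoint Φ h = 0 := by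
    intro h
    rw [hW, Submodule.mem_orthogonal]
    constructor
    · intro hh
      refine ext_inner_left ℂ fun v => ?_
      rw [ContinuousLinearMap.adjoint_inner_right, inner_zero_right]
      exact hh _ ⟨v, rfl⟩
    · rintro hh _ ⟨v, rfl⟩
      have := ContinuousLinearMap.adjoint_inner_right Φ v h
      rw [hh, inner_zero_right] at this
      exact this.symm
  let L : WithLp 2 (H × W) →ₗ[ℂ] K :=
    ((Φ : H →ₗ[ℂ] K).coprod W.subtype) ∘ₗ
      (WithLp.linearEquiv 2 ℂ (H × W)).toLinearMap
  have hL : ∀ z, L z = Φ z.fst + (z.snd : K) := fun z => rfl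
  have hnorm : ∀ x, ‖Φ x‖ = ‖x‖ := fun x => by
    rw [@norm_eq_sqrt_re_inner ℂ, @norm_eq_sqrt_re_inner ℂ, hinner]
  have hLn : ∀ z, ‖L z‖ = ‖z‖ := by
    intro z
    rw [← sq_eq_sq₀ (norm_nonneg _) (norm_nonneg _), WithLp.prod_norm_sq_eq_of_L2, hL]
    have h0 : ⟪Φ z.fst, (z.snd : K)⟫ = 0 := by
      rw [← ContinuousLinearMap.adjoint_inner_right, (hWmem _).1 z.snd.2, inner_zero_right]
    have := norm_add_sq_eq_norm_sq_add_norm_sq_of_inner_eq_zero _ _ h0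
    rw [sq, this, hnorm, sq, sq, Submodule.coe_norm]
  have hsurj : Function.Surjective (⟨L, hLn⟩ : WithLp 2 (H × W) →ₗᵢ[ℂ] K) := by
    intro y
    refine ⟨WithLp.toLp 2 (ContinuousLinearMap.adjoint Φ y,
      ⟨y - Φ (ContinuousLinearMap.adjoint Φ y), (hWmem _).2 ?_⟩), ?_⟩
    · rw [map_sub, hadj, sub_self]
    · change L _ = y
      rw [hL]
      exact add_sub_cancel _ _
  refine ⟨LinearIsometryEquiv.ofSurjective ⟨L, hLn⟩ hsurj, fun g h => rfl, fun g h => ?_⟩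
  change (E ∘L E) (Φ g + (h : K)) = Φ (S g) + ((0 : W) : K)
  have hh := (hWmem _).1 h.2
  subst hE
  simp only [ContinuousLinearMap.comp_apply, map_add, hh, hadj, map_zero, add_zero, ← hShalf,
    ZeroMemClass.coe_zero]

/-- With `Φ` the analysis operator of the canonical Parseval frame `{S^{-1/2}Uf}` and
`E = Φ S^{1/2} Φ*`, the operator `E²` is unitarily equivalent to `S ⊕ 0`: the map
`U₀ : H ⊕ Φ(H)^⊥ → ℓ²(𝒰)`, `U₀(g ⊕ h) = Φg + h`, is a unitary isomorphism and
`E² U₀ = U₀ (S ⊕ 0)`, where `0` is the zero operator on `Φ(H)^⊥`. -/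
theorem dilation_operator_sq_unitarily_equivalent
    {H : Type} [NormedAddCommGroup H] [InnerProductSpace ℂ H] [CompleteSpace H]
    (𝒰 : Subgroup (H ≃ₗᵢ[ℂ] H)) (f : H) (A B : ℝ) (hA : 0 < A) (hAB : A ≤ B)
    -- `{Uf}_{U ∈ 𝒰}` is a frame for `H`
    (hframe : ∀ x : H,
      A * ‖x‖ ^ 2 ≤ ∑' U : 𝒰, ‖⟪(U : H ≃ₗᵢ[ℂ] H) f, x⟫‖ ^ 2 ∧
      ∑' U : 𝒰, ‖⟪(U : H ≃ₗᵢ[ℂ] H) f, x⟫‖ ^ 2 ≤ B * ‖x‖ ^ 2)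
    -- `S` is the frame operator of `{Uf}_{U ∈ 𝒰}`
    (S : H →L[ℂ] H)
    (hS : ∀ x : H, HasSum (fun U : 𝒰 => ⟪(U : H ≃ₗᵢ[ℂ] H) f, x⟫ • (U : H ≃ₗᵢ[ℂ] H) f) (S x))
    -- `R = S^{-1/2}`: the positive square root of the inverse of `S`
    (R : H →L[ℂ] H) (hRpos : R.IsPositive)
    (hRS : (R ∘L R) ∘L S = ContinuousLinearMap.id ℂ H)
    (hSR : S ∘L (R ∘L R) = ContinuousLinearMap.id ℂ H)
    -- `Shalf = S^{1/2}`: the positive square root of `S`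
    (Shalf : H →L[ℂ] H) (hShalfpos : Shalf.IsPositive) (hShalf : Shalf ∘L Shalf = S)
    -- `Φ` is the analysis operator of the canonical Parseval frame `{S^{-1/2}Uf}`
    (Φ : H →L[ℂ] lp (fun _ : 𝒰 => ℂ) 2)
    (hΦ : ∀ (g : H) (U : 𝒰), Φ g U = ⟪R ((U : H ≃ₗᵢ[ℂ] H) f), g⟫)
    -- `E = Φ S^{1/2} Φ*`
    (E : lp (fun _ : 𝒰 => ℂ) 2 →L[ℂ] lp (fun _ : 𝒰 => ℂ) 2)
    (hE : E = Φ ∘L Shalf ∘L ContinuousLinearMap.adjoint Φ)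
    -- `W = Φ(H)^⊥`, the orthogonal complement of `Φ(H)` in `ℓ²(𝒰)`
    (W : Submodule ℂ (lp (fun _ : 𝒰 => ℂ) 2))
    (hW : W = (LinearMap.range (Φ : H →ₗ[ℂ] lp (fun _ : 𝒰 => ℂ) 2))ᗮ) :
    ∃ U₀ : WithLp 2 (H × W) ≃ₗᵢ[ℂ] lp (fun _ : 𝒰 => ℂ) 2,
      -- `U₀ (g ⊕ h) = Φ g + h`
      (∀ (g : H) (h : W), U₀ ((WithLp.equiv 2 (H × W)).symm (g, h)) = Φ g + (h : lp (fun _ : 𝒰 => ℂ) 2)) ∧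
      -- `E² U₀ = U₀ (S ⊕ 0)`
      (∀ (g : H) (h : W),
        (E ∘L E) (U₀ ((WithLp.equiv 2 (H × W)).symm (g, h))) =
          U₀ ((WithLp.equiv 2 (H × W)).symm (S g, 0))) := by
  have hRR : ∀ x, R (R (S x)) = x := fun x => by
    simpa using congrArg (fun T : H →L[ℂ] H => T x) hRS
  have hRR2 : ∀ x, S (R (R x)) = x := fun x => by
    simpa using congrArg (fun T : H →L[ℂ] H => T x) hSR
  have hRinj : ∀ x y, R x = R y → x = y := fun x y h => by
    rw [← hRR2 x, ← hRR2 y, h]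
  have hRSR : ∀ x, R (S (R x)) = x := fun x => hRinj _ _ (hRR (R x))
  have hsym : ∀ x y, ⟪R x, y⟫ = ⟪x, R y⟫ := fun x y => hRpos.isSymmetric x y
  have hinner : ∀ x y, ⟪Φ x, Φ y⟫ = ⟪x, y⟫ := by
    intro x y
    have h1 := lp.hasSum_inner (𝕜 := ℂ) (Φ x) (Φ y)
    have h2 := (hS (R y)).mapL (innerSL ℂ (R x))
    have h3 : innerSL ℂ (R x) (S (R y)) = ⟪x, y⟫ := by
      rw [innerSL_apply_apply, hsym, hRSR]
    rw [h3] at h2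
    refine h1.unique ?_
    convert h2 using 2 with U
    rw [hΦ, hΦ, RCLike.inner_apply, innerSL_apply_apply, inner_smul_right, hsym, hsym,
      inner_conj_symm]
  exact dilation_aux S Shalf hShalf Φ hinner E hE W hW
end

section
/- Let a, b > 0, let M and T be unitary operators on a complex Hilbert space H satisfying TM = e^{-iab} MT, and suppose f ∈ H is such that {MᵐTⁿf : m,n ∈ ℤ} is a frame for H with optimal bounds A² and B² (0 < A ≤ B). Then there exist: a complex Hilbert space K and unitary operators M', T' on K with T'M' = e^{-iab} M'T'; vectors f₁ ∈ H and f₂ ∈ K such that {(MᵐTⁿf₁) ⊕ ((M')ᵐ(T')ⁿf₂) : m,n ∈ ℤ} is an orthonormal basis of H ⊕ K; and a positive operator E : H → H with A‖g‖ ≤ ‖Eg‖ ≤ B‖g‖ for all g ∈ H, such that E(MᵐTⁿf₁) = MᵐTⁿf for all m,n ∈ ℤ. -/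
local notation "⟪" x ", " y "⟫" => @inner ℂ _ _ x y


section GaborHelpers

open ContinuousLinearMap

lemma gd_mul_apply {X : Type} [NormedAddCommGroup X] [InnerProductSpace ℂ X]
    (u v : X ≃ₗᵢ[ℂ] X) (x : X) : (u * v) x = u (v x) := rfl

/-- Intertwining with an isometry equivalence extends to integer powers. -/
lemma gd_zpow {X Y : Type} [NormedAddCommGroup X] [InnerProductSpace ℂ X]
    [NormedAddCommGroup Y] [InnerProductSpace ℂ Y] (u : X ≃ₗᵢ[ℂ] X) (v : Y ≃ₗᵢ[ℂ] Y)
    (φ : X → Y) (h : ∀ x, φ (u x) = v (φ x)) (k : ℤ) (x : X) :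
    φ ((u ^ k) x) = (v ^ k) (φ x) := by
  induction k with
  | zero => simp
  | succ n ih =>
    rw [zpow_add_one, zpow_add_one, (Commute.zpow_self u (n : ℤ)).eq,
      (Commute.zpow_self v (n : ℤ)).eq]
    simp only [LinearIsometryEquiv.coe_mul, Function.comp_apply]
    rw [h, ih]
  | pred n ih =>
    apply v.injective
    rw [← h, ← gd_mul_apply, ← gd_mul_apply, mul_self_zpow,
      mul_self_zpow]
    simpa using ih

lemma gd_seq {Y : Type} [NormedAddCommGroup Y] [InnerProductSpace ℂ Y] (v : Y ≃ₗᵢ[ℂ] Y)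
    (φ : ℤ → Y) (h : ∀ k, v (φ k) = φ (k + 1)) (k : ℤ) : (v ^ k) (φ 0) = φ k := by
  induction k with
  | zero => simp
  | succ n ih =>
    rw [← mul_self_zpow, gd_mul_apply, ih, h]
  | pred n ih =>
    apply v.injective
    rw [h, ← gd_mul_apply, mul_self_zpow]
    simpa using ih

/-- Square-summable families. -/
abbrev GdL : Type := lp (fun _ : ℤ × ℤ => ℂ) 2

lemma gd_normsq (x : GdL) : ‖x‖ ^ 2 = ∑' i, ‖x i‖ ^ 2 := by
  have h := lp.norm_rpow_eq_tsum (p := 2) (by norm_num) x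
  simpa using h

lemma gd_memlp (x : ℤ × ℤ → ℂ) : Memℓp x 2 ↔ Summable fun i => ‖x i‖ ^ 2 := by
  have h := memℓp_gen_iff (p := 2) (f := x) (by norm_num)
  simpa using h

lemma gd_wmem (e : ℤ × ℤ ≃ ℤ × ℤ) (w : ℤ × ℤ → ℂ) (hw : ∀ i, ‖w i‖ = 1) (x : GdL) :
    Memℓp (fun i => w i * x (e i)) 2 := by
  rw [gd_memlp]
  have h := (gd_memlp x).1 (lp.memℓp x)
  simp only [norm_mul, hw, one_mul]
  exact e.summable_iff.2 h

/-- Weighted permutation operator. -/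
noncomputable def gdPerm (e : ℤ × ℤ ≃ ℤ × ℤ) (w : ℤ × ℤ → ℂ) (hw : ∀ i, ‖w i‖ = 1) :
    GdL ≃ₗᵢ[ℂ] GdL where
  toFun x := ⟨fun i => w i * x (e i), gd_wmem e w hw x⟩
  map_add' x y := by ext i; exact mul_add _ _ _
  map_smul' c x := by ext i; simp [mul_left_comm]
  invFun x := ⟨fun i => (w (e.symm i))⁻¹ * x (e.symm i),
    gd_wmem e.symm (fun i => (w (e.symm i))⁻¹) (by simp [hw]) x⟩
  left_inv x := by
    ext i
    have : w (e.symm i) ≠ 0 := by rw [← norm_ne_zero_iff, hw]; norm_num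
    simp [this]
  right_inv x := by
    ext i
    have : w i ≠ 0 := by rw [← norm_ne_zero_iff, hw]; norm_num
    simp [this]
  norm_map' x := by
    rw [← sq_eq_sq₀ (norm_nonneg _) (norm_nonneg _), gd_normsq, gd_normsq]
    simp [hw]
    exact e.tsum_eq (fun i => ‖x i‖ ^ 2)

lemma gdPerm_apply (e : ℤ × ℤ ≃ ℤ × ℤ) (w : ℤ × ℤ → ℂ) (hw : ∀ i, ‖w i‖ = 1) (x : GdL)
    (i : ℤ × ℤ) : gdPerm e w hw x i = w i * x (e i) := rfl

/-- Restriction of a unitary to an invariant submodule. -/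
lemma gd_restrict {L : Type} [NormedAddCommGroup L] [InnerProductSpace ℂ L]
    (U : L ≃ₗᵢ[ℂ] L) (N : Submodule ℂ L) (h : ∀ x, U x ∈ N ↔ x ∈ N) :
    ∃ U' : N ≃ₗᵢ[ℂ] N, ∀ x : N, (U' x : L) = U x := by
  have hN : N.map (U : L →ₗ[ℂ] L) = N := by
    ext y
    constructor
    · rintro ⟨x, hx, rfl⟩
      exact (h x).2 hx
    · intro hy
      refine ⟨U.symm y, ?_, by simp⟩
      exact (h _).1 (by simpa using hy)
  exact ⟨(U.submoduleMap N).trans (LinearIsometryEquiv.ofEq _ _ hN), fun x => rfl⟩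

/-- If `V` intertwines unitaries then so does its adjoint. -/
lemma gd_adj {H L : Type} [NormedAddCommGroup H] [InnerProductSpace ℂ H] [CompleteSpace H]
    [NormedAddCommGroup L] [InnerProductSpace ℂ L] [CompleteSpace L]
    (V : H →L[ℂ] L) (U : H ≃ₗᵢ[ℂ] H) (U' : L ≃ₗᵢ[ℂ] L) (h : ∀ x, V (U x) = U' (V x)) (y : L) :
    adjoint V (U' y) = U (adjoint V y) := by
  refine ext_inner_right ℂ fun z => ?_
  obtain ⟨x, rfl⟩ := U.surjective z
  rw [adjoint_inner_left, h, U'.inner_map_map, U.inner_map_map, adjoint_inner_left]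

/-- The dilation part. -/
lemma gd_core {H L : Type} [NormedAddCommGroup H] [InnerProductSpace ℂ H] [CompleteSpace H]
    [NormedAddCommGroup L] [InnerProductSpace ℂ L] [CompleteSpace L]
    (V : H →L[ℂ] L) (hV : ∀ x, adjoint V (V x) = x) (c : ℂ)
    (M T : H ≃ₗᵢ[ℂ] H) (M₀ T₀ : L ≃ₗᵢ[ℂ] L)
    (hM : ∀ x, V (M x) = M₀ (V x)) (hT : ∀ x, V (T x) = T₀ (V x))
    (hMT : ∀ x, T₀ (M₀ x) = c • M₀ (T₀ x)) (d : ℤ × ℤ → L)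
    (hd : ∀ p, (M₀ ^ p.1) ((T₀ ^ p.2) (d 0)) = d p) (hdo : Orthonormal ℂ d)
    (hdt : ∀ x, (∀ p, ⟪d p, x⟫ = 0) → x = 0) :
    ∃ (K : Type) (_ : NormedAddCommGroup K) (_ : InnerProductSpace ℂ K) (_ : CompleteSpace K)
      (M' T' : K ≃ₗᵢ[ℂ] K) (f₂ : K),
      (∀ y : K, T' (M' y) = c • M' (T' y)) ∧
      Orthonormal ℂ (fun p : ℤ × ℤ =>
        (WithLp.equiv 2 (H × K)).symm ((M ^ p.1) ((T ^ p.2) (adjoint V (d 0))),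
          (M' ^ p.1) ((T' ^ p.2) f₂))) ∧
      (Submodule.span ℂ (Set.range fun p : ℤ × ℤ =>
        (WithLp.equiv 2 (H × K)).symm ((M ^ p.1) ((T ^ p.2) (adjoint V (d 0))),
          (M' ^ p.1) ((T' ^ p.2) f₂)))).topologicalClosure = ⊤ := by
  have hM' := gd_adj V M M₀ hM
  have hT' := gd_adj V T T₀ hT
  let N : Submodule ℂ L := LinearMap.ker (adjoint V : L →ₗ[ℂ] H)
  have hmem : ∀ x, x ∈ N ↔ adjoint V x = 0 := fun x => Iff.rfl
  have hcl : IsClosed (N : Set L) := by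
    have : (N : Set L) = (adjoint V) ⁻¹' {0} := by ext x; simp [hmem]
    rw [this]
    exact isClosed_singleton.preimage (adjoint V).continuous
  have hcomp : CompleteSpace N := hcl.completeSpace_coe
  obtain ⟨M', hM1⟩ := gd_restrict M₀ N (fun x => by rw [hmem, hmem, hM']; simp)
  obtain ⟨T', hT1⟩ := gd_restrict T₀ N (fun x => by rw [hmem, hmem, hT']; simp)
  let Q : L → L := fun x => x - V (adjoint V x)
  have hQ : ∀ x, Q x ∈ N := fun x => by rw [hmem]; simp [Q, hV]
  have hQM : ∀ x, Q (M₀ x) = M₀ (Q x) := fun x => by simp [Q, hM', hM]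
  have hQT : ∀ x, Q (T₀ x) = T₀ (Q x) := fun x => by simp [Q, hT', hT]
  let f₂ : N := ⟨Q (d 0), hQ _⟩
  have e2 : ∀ p : ℤ × ℤ, (M' ^ p.1) ((T' ^ p.2) f₂) = ⟨Q (d p), hQ _⟩ := by
    intro p
    apply Subtype.ext
    rw [gd_zpow M' M₀ (fun x : N => (x : L)) hM1, gd_zpow T' T₀ (fun x : N => (x : L)) hT1]
    change (M₀ ^ p.1) ((T₀ ^ p.2) (Q (d 0))) = Q (d p)
    rw [← gd_zpow T₀ T₀ Q hQT, ← gd_zpow M₀ M₀ Q hQM, hd]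
  have e1 : ∀ p : ℤ × ℤ, (M ^ p.1) ((T ^ p.2) (adjoint V (d 0))) = adjoint V (d p) := by
    intro p
    rw [← gd_zpow T₀ T (adjoint V) hT', ← gd_zpow M₀ M (adjoint V) hM', hd]
  refine ⟨N, inferInstance, inferInstance, hcomp, M', T', f₂, ?_, ?_, ?_⟩
  · intro y
    apply Subtype.ext
    rw [hT1, hM1, hMT, Submodule.coe_smul, hM1, hT1]
  · simp only [e1, e2]
    rw [orthonormal_iff_ite] at hdo ⊢
    intro p q
    rw [← hdo p q, WithLp.prod_inner_apply]
    change ⟪adjoint V (d p), adjoint V (d q)⟫ + ⟪Q (d p), Q (d q)⟫ = _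
    simp only [Q, inner_sub_left, inner_sub_right]
    rw [← adjoint_inner_left V, ← adjoint_inner_right V, ← adjoint_inner_left V, hV]
    ring
  · simp only [e1, e2]
    rw [Submodule.topologicalClosure_eq_top_iff, Submodule.eq_bot_iff]
    intro z hz
    rw [Submodule.mem_orthogonal] at hz
    have hz' : ∀ p, ⟪d p, V z.fst + (z.snd : L)⟫ = 0 := by
      intro p
      have h := hz _ (Submodule.subset_span ⟨p, rfl⟩)
      rw [WithLp.prod_inner_apply] at h
      change ⟪adjoint V (d p), z.fst⟫ + ⟪Q (d p), (z.snd : L)⟫ = 0 at h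
      have h2 : ⟪V (adjoint V (d p)), (z.snd : L)⟫ = 0 := by
        rw [← adjoint_inner_right V, (hmem _).1 z.snd.2, inner_zero_right]
      simp only [Q, inner_sub_left, h2, sub_zero] at h
      rw [inner_add_right, ← adjoint_inner_left V, h]
    have h0 := hdt _ hz'
    have h1 : z.fst = 0 := by
      have := congrArg (adjoint V) h0
      rwa [map_add, hV, (hmem _).1 z.snd.2, add_zero, map_zero] at this
    have h2 : z.snd = 0 := by
      apply Subtype.ext
      rw [h1] at h0
      simpa using h0
    apply WithLp.ofLp_injective
    exact Prod.ext h1 h2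

/-- The analysis operator of a Bessel family. -/
lemma gd_analysis {H : Type} [NormedAddCommGroup H] [InnerProductSpace ℂ H]
    (g : ℤ × ℤ → H) (B : ℝ) (hB : 0 ≤ B) (hs : ∀ x, Summable fun p => ‖⟪g p, x⟫‖ ^ 2)
    (hb : ∀ x, ∑' p, ‖⟪g p, x⟫‖ ^ 2 ≤ B ^ 2 * ‖x‖ ^ 2) :
    ∃ Θ : H →L[ℂ] GdL, ∀ x p, Θ x p = ⟪g p, x⟫ := by
  let Θ₀ : H →ₗ[ℂ] GdL :=
    { toFun := fun x => ⟨fun p => ⟪g p, x⟫, (gd_memlp _).2 (hs x)⟩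
      map_add' := fun x y => by ext i; exact inner_add_right _ _ _
      map_smul' := fun c x => by ext i; exact inner_smul_right _ _ _ }
  refine ⟨Θ₀.mkContinuous B fun x => ?_, fun x p => rfl⟩
  refine abs_le_of_sq_le_sq' ?_ (by positivity) |>.2
  rw [gd_normsq, mul_pow]
  exact hb x

/-- The square root of the frame operator. -/
lemma gd_sqrt {H L : Type} [NormedAddCommGroup H] [InnerProductSpace ℂ H] [CompleteSpace H]
    [NormedAddCommGroup L] [InnerProductSpace ℂ L] [CompleteSpace L]
    (Θ : H →L[ℂ] L) (A : ℝ) (hA : 0 < A) (h : ∀ x, A ^ 2 * ‖x‖ ^ 2 ≤ ‖Θ x‖ ^ 2) :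
    ∃ E F : H →L[ℂ] H, E.IsPositive ∧ (∀ x, E (F x) = x) ∧ (∀ x, F (E x) = x) ∧
      (∀ x, ‖E x‖ = ‖Θ x‖) ∧ (∀ x, E (E x) = adjoint Θ (Θ x)) ∧
      ∀ (U : H ≃ₗᵢ[ℂ] H) (U' : L ≃ₗᵢ[ℂ] L), (∀ x, Θ (U x) = U' (Θ x)) →
        ∀ x, E (U x) = U (E x) := by
  let S : H →L[ℂ] H := adjoint Θ ∘L Θ
  have hSpos : 0 ≤ S := by
    rw [nonneg_iff_isPositive]
    exact isPositive_adjoint_comp_self Θ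
  let E : H →L[ℂ] H := CFC.sqrt S
  have hEpos : E.IsPositive := by
    rw [← nonneg_iff_isPositive]
    exact CFC.sqrt_nonneg S
  have hEE : E * E = S := CFC.sqrt_mul_sqrt_self S hSpos
  have hSu : IsUnit S := by
    refine isUnit_of_forall_le_norm_inner_map S (c := ⟨A ^ 2, by positivity⟩)
      (by exact_mod_cast (by positivity : 0 < A ^ 2)) fun x => ?_
    have : ⟪S x, x⟫ = (‖Θ x‖ : ℂ) ^ 2 := by
      change ⟪adjoint Θ (Θ x), x⟫ = _
      rw [adjoint_inner_left, inner_self_eq_norm_sq_to_K]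
      rfl
    rw [this]
    simp only [norm_pow, Complex.norm_real, norm_norm]
    rw [mul_comm]
    exact h x
  have hEu : IsUnit E := by
    rw [← hEE] at hSu
    exact ((Commute.refl E).isUnit_mul_iff.1 hSu).1
  obtain ⟨u, hu⟩ := hEu
  have hEEx : ∀ x, E (E x) = adjoint Θ (Θ x) := fun x => congrArg (fun G : H →L[ℂ] H => G x) hEE
  refine ⟨E, (↑u⁻¹ : H →L[ℂ] H), hEpos, fun x => ?_, fun x => ?_, fun x => ?_, hEEx, ?_⟩
  · have := u.mul_inv
    rw [hu] at this
    exact congrArg (fun G : H →L[ℂ] H => G x) this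
  · have := u.inv_mul
    rw [hu] at this
    exact congrArg (fun G : H →L[ℂ] H => G x) this
  · rw [← sq_eq_sq₀ (norm_nonneg _) (norm_nonneg _)]
    have h1 : ⟪E x, E x⟫ = ⟪Θ x, Θ x⟫ := by
      rw [← adjoint_inner_left Θ, ← hEEx, ← adjoint_inner_left E, hEpos.isSelfAdjoint.adjoint_eq]
    rw [inner_self_eq_norm_sq_to_K, inner_self_eq_norm_sq_to_K] at h1
    exact_mod_cast h1
  · intro U U' hU x
    have hU2 := gd_adj Θ U U' hU
    have hc : Commute S (U : H →L[ℂ] H) := by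
      ext y
      change adjoint Θ (Θ (U y)) = U (adjoint Θ (Θ y))
      rw [hU, hU2]
    have hc2 : Commute E (U : H →L[ℂ] H) := hc.cfcₙ_nnreal _
    exact congrArg (fun G : H →L[ℂ] H => G x) hc2.eq

end GaborHelpers

/-- **Orthonormal dilation for Gabor type unitary systems.** Let `M, T` be unitaries on `H`
with `TM = e^{-iab}MT` and suppose `{MᵐTⁿf}` is a frame for `H` with optimal bounds `A²`,
`B²`. Then there are a Hilbert space `K` with unitaries `M', T'` satisfying the same
commutation relation, vectors `f₁ ∈ H`, `f₂ ∈ K` with `{MᵐTⁿf₁ ⊕ (M')ᵐ(T')ⁿf₂}` an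
orthonormal basis of `H ⊕ K`, and a positive operator `E : H → H` with
`A‖g‖ ≤ ‖Eg‖ ≤ B‖g‖` such that `E(MᵐTⁿf₁) = MᵐTⁿf` for all `m, n ∈ ℤ`. -/
theorem gabor_frame_dilation
    {H : Type} [NormedAddCommGroup H] [InnerProductSpace ℂ H] [CompleteSpace H]
    (a b : ℝ) (ha : 0 < a) (hb : 0 < b)
    -- `M, T` form a Gabor type unitary system: `TM = e^{-iab} MT`
    (M T : H ≃ₗᵢ[ℂ] H)
    (hMT : ∀ x : H, T (M x) = Complex.exp (-(Complex.I * (a * b))) • M (T x))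
    -- `{MᵐTⁿ f}` is a frame for `H` with bounds `A²`, `B²` ...
    (f : H) (A B : ℝ) (hA : 0 < A) (hAB : A ≤ B)
    (hframe : ∀ x : H,
      A ^ 2 * ‖x‖ ^ 2 ≤ ∑' p : ℤ × ℤ, ‖⟪(M ^ p.1) ((T ^ p.2) f), x⟫‖ ^ 2 ∧
      ∑' p : ℤ × ℤ, ‖⟪(M ^ p.1) ((T ^ p.2) f), x⟫‖ ^ 2 ≤ B ^ 2 * ‖x‖ ^ 2)
    -- ... and these bounds are optimal
    (hAopt : ∀ A' : ℝ,
      (∀ x : H, A' * ‖x‖ ^ 2 ≤ ∑' p : ℤ × ℤ, ‖⟪(M ^ p.1) ((T ^ p.2) f), x⟫‖ ^ 2) → A' ≤ A ^ 2)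
    (hBopt : ∀ B' : ℝ,
      (∀ x : H, ∑' p : ℤ × ℤ, ‖⟪(M ^ p.1) ((T ^ p.2) f), x⟫‖ ^ 2 ≤ B' * ‖x‖ ^ 2) → B ^ 2 ≤ B') :
    ∃ (K : Type) (_ : NormedAddCommGroup K) (_ : InnerProductSpace ℂ K) (_ : CompleteSpace K)
      (M' T' : K ≃ₗᵢ[ℂ] K) (f₁ : H) (f₂ : K) (E : H →L[ℂ] H),
      -- `M', T'` form a Gabor type unitary system of the same lattice
      (∀ y : K, T' (M' y) = Complex.exp (-(Complex.I * (a * b))) • M' (T' y)) ∧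
      -- `{(MᵐTⁿf₁) ⊕ ((M')ᵐ(T')ⁿf₂)}` is an orthonormal basis of `H ⊕ K`
      Orthonormal ℂ (fun p : ℤ × ℤ =>
        (WithLp.equiv 2 (H × K)).symm ((M ^ p.1) ((T ^ p.2) f₁), (M' ^ p.1) ((T' ^ p.2) f₂))) ∧
      (Submodule.span ℂ (Set.range fun p : ℤ × ℤ =>
        (WithLp.equiv 2 (H × K)).symm ((M ^ p.1) ((T ^ p.2) f₁),
          (M' ^ p.1) ((T' ^ p.2) f₂)))).topologicalClosure = ⊤ ∧
      -- `E` is positive with `A‖g‖ ≤ ‖Eg‖ ≤ B‖g‖`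
      E.IsPositive ∧
      (∀ g : H, A * ‖g‖ ≤ ‖E g‖ ∧ ‖E g‖ ≤ B * ‖g‖) ∧
      -- `E(MᵐTⁿf₁) = MᵐTⁿf`
      (∀ m n : ℤ, E ((M ^ m) ((T ^ n) f₁)) = (M ^ m) ((T ^ n) f)) := by
  classical
  set lam : ℂ := Complex.exp (-(Complex.I * (a * b))) with hlam
  have hlam1 : ‖lam‖ = 1 := by
    rw [hlam, Complex.norm_exp]
    simp
  have hlam0 : lam ≠ 0 := Complex.exp_ne_zero _
  let g : ℤ × ℤ → H := fun p => (M ^ p.1) ((T ^ p.2) f)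
  have hs : ∀ x, Summable fun p => ‖⟪g p, x⟫‖ ^ 2 := by
    intro x
    by_contra hn
    have h0 := tsum_eq_zero_of_not_summable hn
    have h1 := (hframe x).1
    change _ ≤ ∑' p, ‖⟪g p, x⟫‖ ^ 2 at h1
    rw [h0] at h1
    have hx : x ≠ 0 := by
      rintro rfl
      apply hn
      simp
    have : 0 < A ^ 2 * ‖x‖ ^ 2 := by
      have := norm_pos_iff.2 hx
      positivity
    linarith
  obtain ⟨Θ, hΘ⟩ := gd_analysis g B (hA.le.trans hAB) hs (fun x => (hframe x).2)
  have hΘn : ∀ x, ‖Θ x‖ ^ 2 = ∑' p, ‖⟪g p, x⟫‖ ^ 2 := by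
    intro x
    rw [gd_normsq]
    simp only [hΘ]
  obtain ⟨E, F, hE, hEF, hFE, hEn, hEE, hEU⟩ := gd_sqrt Θ A hA
    (fun x => by rw [hΘn]; exact (hframe x).1)
  -- the model unitaries
  let M₀ : GdL ≃ₗᵢ[ℂ] GdL := gdPerm ((Equiv.subRight (1 : ℤ)).prodCongr (Equiv.refl ℤ))
    (fun _ => 1) (by simp)
  let T₀ : GdL ≃ₗᵢ[ℂ] GdL := gdPerm ((Equiv.refl ℤ).prodCongr (Equiv.subRight (1 : ℤ)))
    (fun p => lam ^ p.1) (by simp [hlam1])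
  have hM₀ : ∀ (x : GdL) (p : ℤ × ℤ), M₀ x p = x (p.1 - 1, p.2) := by
    intro x p
    exact one_mul _
  have hT₀ : ∀ (x : GdL) (p : ℤ × ℤ), T₀ x p = lam ^ p.1 * x (p.1, p.2 - 1) := by
    intro x p
    rfl
  have hMg : ∀ p : ℤ × ℤ, g p = M (g (p.1 - 1, p.2)) := by
    intro p
    simp only [g]
    rw [← gd_mul_apply M, mul_self_zpow, sub_add_cancel]
  -- commutation with powers
  have hTMk : ∀ (k : ℤ) (x : H), T ((M ^ k) x) = lam ^ k • (M ^ k) (T x) := by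
    intro k
    induction k with
    | zero => intro x; simp
    | succ n ih =>
      intro x
      rw [zpow_add_one, gd_mul_apply, ih, hMT, map_smul, smul_smul,
        gd_mul_apply, zpow_add_one₀ hlam0]
    | pred n ih =>
      intro x
      obtain ⟨y, rfl⟩ := M.surjective x
      have h1 : (M ^ (-(n : ℤ) - 1)) (M y) = (M ^ (-(n : ℤ))) y := by
        rw [← gd_mul_apply, ← zpow_add_one, sub_add_cancel]
      have h2 : (M ^ (-(n : ℤ) - 1)) (M (T y)) = (M ^ (-(n : ℤ))) (T y) := by
        rw [← gd_mul_apply, ← zpow_add_one, sub_add_cancel]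
      rw [h1, ih, hMT, map_smul, h2, smul_smul, ← zpow_add_one₀ hlam0, sub_add_cancel]
  have hTg : ∀ p : ℤ × ℤ, T (g (p.1, p.2 - 1)) = lam ^ p.1 • g p := by
    intro p
    simp only [g]
    rw [hTMk, ← gd_mul_apply T, mul_self_zpow, sub_add_cancel]
  have hΘM : ∀ x, Θ (M x) = M₀ (Θ x) := by
    intro x
    ext p
    rw [hM₀, hΘ, hΘ, hMg p, M.inner_map_map]
  have hΘT : ∀ x, Θ (T x) = T₀ (Θ x) := by
    intro x
    ext p
    rw [hT₀, hΘ, hΘ, ← T.inner_map_map (g (p.1, p.2 - 1)) x, hTg p, inner_smul_left, ← mul_assoc]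
    have : lam ^ p.1 * (starRingEnd ℂ) (lam ^ p.1) = 1 := by
      rw [Complex.mul_conj, Complex.normSq_eq_norm_sq, norm_zpow, hlam1]
      simp
    rw [this, one_mul]
  have hEM := hEU M M₀ hΘM
  have hET := hEU T T₀ hΘT
  have hFM : ∀ x, F (M x) = M (F x) := fun x => by
    rw [← hFE (M (F x)), hEM, hEF]
  have hFT : ∀ x, F (T x) = T (F x) := fun x => by
    rw [← hFE (T (F x)), hET, hEF]
  let V : H →L[ℂ] GdL := Θ ∘L F
  have hFsym : ∀ x y, ⟪F x, y⟫ = ⟪x, F y⟫ := by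
    intro x y
    have h := ContinuousLinearMap.adjoint_inner_left E (F y) (F x)
    rw [hE.isSelfAdjoint.adjoint_eq, hEF, hEF] at h
    exact h.symm
  have hVadj : ∀ y, ContinuousLinearMap.adjoint V y
      = F (ContinuousLinearMap.adjoint Θ y) := by
    intro y
    refine ext_inner_right ℂ fun z => ?_
    rw [ContinuousLinearMap.adjoint_inner_left, hFsym, ContinuousLinearMap.adjoint_inner_left]
    rfl
  have hV : ∀ x, ContinuousLinearMap.adjoint V (V x) = x := by
    intro x
    rw [hVadj]
    change F (ContinuousLinearMap.adjoint Θ (Θ (F x))) = x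
    rw [← hEE, hFE, hEF]
  let d : ℤ × ℤ → GdL := fun p => lp.single 2 p (1 : ℂ)
  have hdi : ∀ p (x : GdL), ⟪d p, x⟫ = x p := by
    intro p x
    simp [d, lp.inner_single_left]
  have hdap : ∀ p q : ℤ × ℤ, d p q = if q = p then 1 else 0 := by
    intro p q
    simp only [d, lp.single_apply, Pi.single_apply]
  have hMd : ∀ (n k : ℤ), M₀ (d (k, n)) = d (k + 1, n) := by
    intro n k
    ext p
    rw [hM₀, hdap, hdap]
    simp only [Prod.ext_iff, sub_eq_iff_eq_add]
  have hTd : ∀ k : ℤ, T₀ (d (0, k)) = d (0, k + 1) := by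
    intro k
    ext p
    rw [hT₀, hdap, hdap]
    simp only [Prod.ext_iff, sub_eq_iff_eq_add]
    by_cases h : p.1 = 0 <;> simp [h]
  have hd : ∀ p : ℤ × ℤ, (M₀ ^ p.1) ((T₀ ^ p.2) (d 0)) = d p := by
    intro p
    have h1 := gd_seq T₀ (fun k => d (0, k)) hTd p.2
    have h2 := gd_seq M₀ (fun k => d (k, p.2)) (hMd p.2) p.1
    rw [← Prod.zero_eq_mk] at h1
    rw [h1]
    exact h2
  have hΘd : ContinuousLinearMap.adjoint Θ (d 0) = f := by
    refine ext_inner_right ℂ fun z => ?_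
    rw [ContinuousLinearMap.adjoint_inner_left, hdi, hΘ]
    simp [g]
  obtain ⟨K, i1, i2, i3, M', T', f₂, hc, ho, hspan⟩ := gd_core V hV lam M T M₀ T₀
    (fun x => by change Θ (F (M x)) = M₀ (Θ (F x)); rw [hFM, hΘM])
    (fun x => by change Θ (F (T x)) = T₀ (Θ (F x)); rw [hFT, hΘT])
    (fun x => by
      ext p
      rw [lp.coeFn_smul, Pi.smul_apply, hT₀, hM₀, hM₀, hT₀, smul_eq_mul, ← mul_assoc,
        ← zpow_one_add₀ hlam0, add_sub_cancel])
    d hd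
    (by
      rw [orthonormal_iff_ite]
      intro p q
      rw [hdi, hdap])
    (fun x hx => by
      ext p
      rw [← hdi, hx]
      rfl)
  refine ⟨K, i1, i2, i3, M', T', ContinuousLinearMap.adjoint V (d 0), f₂, E, hc, ho, hspan, hE,
    ?_, ?_⟩
  · intro x
    have h := hframe x
    change _ ≤ ∑' p, ‖⟪g p, x⟫‖ ^ 2 ∧ ∑' p, ‖⟪g p, x⟫‖ ^ 2 ≤ _ at h
    rw [← hΘn, ← mul_pow, ← mul_pow] at h
    rw [hEn]
    exact ⟨(abs_le_of_sq_le_sq' h.1 (norm_nonneg _)).2,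
      (abs_le_of_sq_le_sq' h.2 (mul_nonneg (hA.le.trans hAB) (norm_nonneg _))).2⟩
  · intro m n
    rw [gd_zpow M M E hEM, gd_zpow T T E hET, hVadj, hEF, hΘd]
end
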